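/- arXiv:2411.01888 — 2 statements merged into one kernel-verified Lean document; each statement's English description precedes it below -/
import Mathlib

section
/- For all natural numbers m ≥ 2 and l ≥ 2, one has Γ(l/2 + (m−1)/2) / (Γ((m−1)/2) · Γ(l/2 + 1)) ≤ 2^5 · (l+m−2)^m. -/
theorem gamma_half_aux (l : ℕ) :
    Real.Gamma ((l : ℝ)/2 + 1/2) ≤ Real.sqrt Real.pi * Real.Gamma ((l : ℝ)/2 + 1) := by
  induction l using Nat.twoStepInduction with
  | zero =>
    norm_num [Real.Gamma_one_half_eq]
  | one =>
    have h := Real.Gamma_add_one (s := 1/2) (by norm_num)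
    rw [Real.Gamma_one_half_eq] at h
    have h2 : Real.sqrt Real.pi * Real.sqrt Real.pi = Real.pi :=
      Real.mul_self_sqrt Real.pi_pos.le
    have h3 : ((1 : ℕ) : ℝ)/2 + 1/2 = 1 := by norm_num
    rw [h3, Real.Gamma_one, Nat.cast_one, h]
    nlinarith [Real.pi_gt_three]
  | more l ih _ =>
    have h1 : (((l + 2 : ℕ)) : ℝ)/2 + 1/2 = ((l : ℝ)/2 + 1/2) + 1 := by push_cast; ring
    have h2 : (((l + 2 : ℕ)) : ℝ)/2 + 1 = ((l : ℝ)/2 + 1) + 1 := by push_cast; ring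
    rw [h1, h2, Real.Gamma_add_one (by positivity), Real.Gamma_add_one (by positivity)]
    have hp : 0 < Real.Gamma ((l : ℝ)/2 + 1/2) := Real.Gamma_pos_of_pos (by positivity)
    have hl : (0 : ℝ) ≤ l := Nat.cast_nonneg l
    calc ((l : ℝ)/2 + 1/2) * Real.Gamma ((l : ℝ)/2 + 1/2)
        ≤ ((l : ℝ)/2 + 1) * (Real.sqrt Real.pi * Real.Gamma ((l : ℝ)/2 + 1)) := by
          apply mul_le_mul _ ih hp.le (by positivity)
          linarith
      _ = _ := by ring

theorem gamma_ratio_aux (l : ℕ) (hl : 2 ≤ l) (n : ℕ) :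
    Real.Gamma ((l : ℝ)/2 + ((n : ℝ) + 1)/2)
        / (Real.Gamma (((n : ℝ) + 1)/2) * Real.Gamma ((l : ℝ)/2 + 1))
      ≤ 2^5 * ((l : ℝ) + (n : ℝ))^(n + 2) := by
  have hl' : (2 : ℝ) ≤ l := by exact_mod_cast hl
  have hG : 0 < Real.Gamma ((l : ℝ)/2 + 1) := Real.Gamma_pos_of_pos (by positivity)
  induction n using Nat.twoStepInduction with
  | zero =>
    have h := gamma_half_aux l
    simp only [Nat.cast_zero, zero_add, add_zero, Real.Gamma_one_half_eq]
    have hs : 0 < Real.sqrt Real.pi := Real.sqrt_pos.mpr Real.pi_pos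
    have : Real.Gamma ((l : ℝ)/2 + 1/2) / (Real.sqrt Real.pi * Real.Gamma ((l : ℝ)/2 + 1)) ≤ 1 :=
      (div_le_one (by positivity)).mpr h
    nlinarith
  | one =>
    have h3 : (((1 : ℕ) : ℝ) + 1)/2 = 1 := by norm_num
    rw [h3, Real.Gamma_one, one_mul, div_self hG.ne']
    have : (1 : ℝ) ≤ ((l : ℝ) + (1 : ℕ))^(1 + 2) := one_le_pow₀ (by push_cast; linarith)
    linarith
  | more n ih _ =>
    have hn : (0 : ℝ) ≤ n := Nat.cast_nonneg n
    have h1 : (l : ℝ)/2 + (((n + 2 : ℕ) : ℝ) + 1)/2 = ((l : ℝ)/2 + ((n : ℝ) + 1)/2) + 1 := by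
      push_cast; ring
    have h2 : (((n + 2 : ℕ) : ℝ) + 1)/2 = ((n : ℝ) + 1)/2 + 1 := by push_cast; ring
    rw [h1, h2, Real.Gamma_add_one (by positivity), Real.Gamma_add_one (by positivity)]
    have hA : 0 < Real.Gamma ((l : ℝ)/2 + ((n : ℝ) + 1)/2) := Real.Gamma_pos_of_pos (by positivity)
    have hB : 0 < Real.Gamma (((n : ℝ) + 1)/2) := Real.Gamma_pos_of_pos (by positivity)
    set A := Real.Gamma ((l : ℝ)/2 + ((n : ℝ) + 1)/2)
    set B := Real.Gamma (((n : ℝ) + 1)/2)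
    set C := Real.Gamma ((l : ℝ)/2 + 1)
    have hr : ((l : ℝ) + n + 1) / (n + 1) ≤ ((l : ℝ) + n + 2)^2 := by
      rw [div_le_iff₀ (by positivity)]
      nlinarith [mul_nonneg (sq_nonneg ((l : ℝ) + n + 2)) hn]
    calc ((l : ℝ)/2 + ((n : ℝ) + 1)/2) * A / (((n : ℝ) + 1)/2 * B * C)
        = (A / (B * C)) * (((l : ℝ) + n + 1) / (n + 1)) := by field_simp; ring
      _ ≤ (2^5 * ((l : ℝ) + (n : ℝ))^(n + 2)) * ((l : ℝ) + n + 2)^2 :=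
          mul_le_mul ih hr (by positivity) (by positivity)
      _ ≤ (2^5 * ((l : ℝ) + n + 2)^(n + 2)) * ((l : ℝ) + n + 2)^2 := by
          have hpow : ((l : ℝ) + n)^(n + 2) ≤ ((l : ℝ) + n + 2)^(n + 2) :=
            pow_le_pow_left₀ (by positivity) (by linarith) _
          exact mul_le_mul_of_nonneg_right (by linarith) (by positivity)
      _ = _ := by push_cast; ring

/-- For all natural numbers `m ≥ 2` and `l ≥ 2`:
`Γ(l/2 + (m−1)/2) / (Γ((m−1)/2) · Γ(l/2 + 1)) ≤ 2^5 · (l+m−2)^m`. -/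
theorem gamma_ratio_bound (m l : ℕ) (hm : 2 ≤ m) (hl : 2 ≤ l) :
    Real.Gamma ((l : ℝ)/2 + ((m : ℝ) - 1)/2)
        / (Real.Gamma (((m : ℝ) - 1)/2) * Real.Gamma ((l : ℝ)/2 + 1))
      ≤ 2^5 * ((l : ℝ) + (m : ℝ) - 2)^m := by
  obtain ⟨n, rfl⟩ := Nat.exists_eq_add_of_le' hm
  have h := gamma_ratio_aux l hl n
  have h1 : ((n + 2 : ℕ) : ℝ) - 1 = (n : ℝ) + 1 := by push_cast; ring
  have h2 : (l : ℝ) + ((n + 2 : ℕ) : ℝ) - 2 = (l : ℝ) + n := by push_cast; ring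
  rw [h1, h2]
  exact h
end

section
/- Let m ≥ 2 be an integer and t > 0. Then for every l ∈ ℕ and every u ∈ [−1,1]: |c_{m,l}^t(u)| ≤ e^{−l(l+m−1)t/2} · 2^7 · (l+m−2)^{m+1}, and c_{m,0}^t(u) = c_{m,1}^t(u) = 0. -/
/-- The Gegenbauer polynomials `C_l^α`, defined by the recurrence
`C_0^α(u) = 1`, `C_1^α(u) = 2αu`, and
`C_l^α(u) = (2u(l+α−1)C_{l−1}^α(u) − (l+2α−2)C_{l−2}^α(u))/l` for `l ≥ 2`. -/
noncomputable def gegenbauer (α : ℝ) : ℕ → ℝ → ℝ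
  | 0, _ => 1
  | 1, u => 2 * α * u
  | (l + 2), u =>
      (2 * u * (((l : ℝ) + 2) + α - 1) * gegenbauer α (l + 1) u
        - (((l : ℝ) + 2) + 2 * α - 2) * gegenbauer α l u) / ((l : ℝ) + 2)

/-- `c_{m,l}^t(u)`: the coefficient functions of the heat kernel expansion on `ℝP^m`,
zero for `l` odd or `l = 0`. -/
noncomputable def cmt (m : ℕ) (t : ℝ) (l : ℕ) (u : ℝ) : ℝ :=
  if l % 2 = 0 ∧ l ≠ 0 then
    Real.exp (-((l : ℝ) * ((l : ℝ) + (m : ℝ) - 1)) * t / 2)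
      * ((2 * (l : ℝ) + (m : ℝ) - 1) / ((m : ℝ) - 1))
      * gegenbauer (((m : ℝ) - 1) / 2) l u
  else 0

/-- `d_{m,n}^t(u) := Σ_{l=0}^n c_{m,l}^t(u)·c_{m,n−l}^t(u)` (Cauchy product coefficients). -/
noncomputable def dmt (m : ℕ) (t : ℝ) (n : ℕ) (u : ℝ) : ℝ :=
  ∑ l ∈ Finset.range (n + 1), cmt m t l u * cmt m t (n - l) u

/-- `h_{m,k}^t(u) := Σ_{n=0}^k d_{m,n}^t(u)·c_{m,k−n}^t(u)` (triple Cauchy product coefficients). -/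
noncomputable def hmt (m : ℕ) (t : ℝ) (k : ℕ) (u : ℝ) : ℝ :=
  ∑ n ∈ Finset.range (k + 1), dmt m t n u * cmt m t (k - n) u

noncomputable def gegA (α : ℝ) : ℕ → ℝ
  | 0 => 1
  | (k + 1) => gegA α k * (α + k) / ((k : ℝ) + 1)

lemma gegA_nonneg {α : ℝ} (h : 0 ≤ α) (k : ℕ) : 0 ≤ gegA α k := by
  induction k with
  | zero => simp [gegA]
  | succ k ih => rw [gegA]; positivity

noncomputable def gegS (α : ℝ) (z : ℂ) : PowerSeries ℂ :=
  PowerSeries.mk fun k => (gegA α k : ℂ) * z ^ k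

lemma gegS_deriv (α : ℝ) (z : ℂ) :
    (1 - PowerSeries.C z * PowerSeries.X) * PowerSeries.derivative ℂ (gegS α z)
      = PowerSeries.C ((α : ℂ) * z) * gegS α z := by
  have key : ∀ k : ℕ, (gegA α (k + 1) : ℂ) * ((k : ℂ) + 1) = gegA α k * (α + k) := by
    intro k
    have h : gegA α (k + 1) * ((k : ℝ) + 1) = gegA α k * (α + k) := by
      rw [gegA]; field_simp
    exact_mod_cast h
  ext n
  rw [sub_mul, one_mul, mul_assoc, map_sub, PowerSeries.coeff_C_mul, PowerSeries.coeff_C_mul]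
  cases n with
  | zero =>
    have := key 0
    simp [gegS, PowerSeries.coeff_derivative] at this ⊢
    rw [this]; ring
  | succ n =>
    rw [PowerSeries.coeff_succ_X_mul]
    have h1 := key (n + 1)
    have h2 := key n
    simp only [gegS, PowerSeries.coeff_derivative, PowerSeries.coeff_mk]
    push_cast at h1 h2 ⊢
    linear_combination z ^ (n + 2) * h1

lemma gegF_ode (α : ℝ) (z w : ℂ) (u : ℂ) (hzw : z * w = 1) (hu : z + w = 2 * u) :
    PowerSeries.derivative ℂ (gegS α z * gegS α w)
      - PowerSeries.C (2 * u) * (PowerSeries.X * PowerSeries.derivative ℂ (gegS α z * gegS α w))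
      + PowerSeries.X * (PowerSeries.X * PowerSeries.derivative ℂ (gegS α z * gegS α w))
      = PowerSeries.C (2 * α * u) * (gegS α z * gegS α w)
        - PowerSeries.C (2 * α : ℂ) * (PowerSeries.X * (gegS α z * gegS α w)) := by
  have h1 := gegS_deriv α z
  have h2 := gegS_deriv α w
  have hC : (PowerSeries.C z : PowerSeries ℂ) * PowerSeries.C w = 1 := by
    rw [← map_mul, hzw, map_one]
  have e1 : (2 * α * u : ℂ) = α * (z + w) := by rw [hu]; ring
  rw [e1, ← hu, Derivation.leibniz]
  simp only [smul_eq_mul, map_add, map_mul, map_ofNat] at *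
  linear_combination (1 - PowerSeries.C w * PowerSeries.X) * gegS α w * h1 +
    (1 - PowerSeries.C z * PowerSeries.X) * gegS α z * h2
    + (- PowerSeries.X ^ 2 * (gegS α z * PowerSeries.derivative ℂ (gegS α w) + gegS α w * PowerSeries.derivative ℂ (gegS α z)) - 2 * PowerSeries.C (α:ℂ) * PowerSeries.X * gegS α z * gegS α w) * hC

lemma gegF_rec (α : ℝ) (z w : ℂ) (u : ℂ) (hzw : z * w = 1) (hu : z + w = 2 * u) (n : ℕ) :
    ((n : ℂ) + 2) * PowerSeries.coeff (n + 2) (gegS α z * gegS α w)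
     = 2 * u * (n + 1 + α) * PowerSeries.coeff (n + 1) (gegS α z * gegS α w)
      - (n + 2 * α) * PowerSeries.coeff n (gegS α z * gegS α w) := by
  have h := congrArg (PowerSeries.coeff (n + 1)) (gegF_ode α z w u hzw hu)
  simp only [map_add, map_sub, PowerSeries.coeff_C_mul, PowerSeries.coeff_succ_X_mul,
    PowerSeries.coeff_derivative] at h
  cases n with
  | zero =>
    simp only [PowerSeries.coeff_zero_X_mul] at h
    push_cast at h ⊢
    linear_combination h
  | succ n =>
    simp only [PowerSeries.coeff_succ_X_mul, PowerSeries.coeff_derivative] at h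
    push_cast at h ⊢
    linear_combination h

lemma geg_eq (α : ℝ) (z w : ℂ) (u : ℝ) (hzw : z * w = 1) (hu : z + w = 2 * u) (n : ℕ) :
    (gegenbauer α n u : ℂ) = PowerSeries.coeff n (gegS α z * gegS α w) := by
  induction n using Nat.twoStepInduction with
  | zero => simp [gegenbauer, gegS, gegA]
  | one =>
    simp [gegenbauer, gegS, gegA, PowerSeries.coeff_mul,
      Finset.Nat.antidiagonal_succ]
    linear_combination (-α : ℂ) * hu
  | more n ih0 ih1 =>
    have h := gegF_rec α z w u hzw hu n
    have hn : ((n : ℂ) + 2) ≠ 0 := by exact_mod_cast (by omega : n + 2 ≠ 0)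
    apply mul_left_cancel₀ hn
    rw [h, gegenbauer]
    push_cast
    rw [← ih0, ← ih1]
    field_simp
    ring

lemma geg_le (α : ℝ) (hα : 0 ≤ α) (u : ℝ) (hu : u ∈ Set.Icc (-1 : ℝ) 1) (n : ℕ) :
    |gegenbauer α n u| ≤ gegenbauer α n 1 := by
  have hs : Real.sqrt (1 - u ^ 2) ^ 2 = 1 - u ^ 2 :=
    Real.sq_sqrt (by nlinarith [hu.1, hu.2])
  set s := Real.sqrt (1 - u ^ 2)
  have hs' : ((s : ℂ)) ^ 2 = 1 - (u : ℂ) ^ 2 := by exact_mod_cast hs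
  have hz : ‖(⟨u, s⟩ : ℂ)‖ = 1 := by
    rw [← sq_eq_sq₀ (norm_nonneg _) zero_le_one, Complex.sq_norm, Complex.normSq_mk]; nlinarith
  have hw : ‖(⟨u, -s⟩ : ℂ)‖ = 1 := by
    rw [← sq_eq_sq₀ (norm_nonneg _) zero_le_one, Complex.sq_norm, Complex.normSq_mk]; nlinarith
  have h1 := geg_eq α ⟨u, s⟩ ⟨u, -s⟩ u
    (by apply Complex.ext <;> simp <;> nlinarith)
    (by apply Complex.ext <;> simp; ring) n
  have h2 := geg_eq α 1 1 1 (by norm_num) (by norm_num) n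
  have h3 : gegenbauer α n 1 = ∑ p ∈ Finset.HasAntidiagonal.antidiagonal n, gegA α p.1 * gegA α p.2 := by
    rw [PowerSeries.coeff_mul] at h2
    simp only [gegS, PowerSeries.coeff_mk, one_pow, mul_one] at h2
    exact_mod_cast h2
  rw [h3, ← Real.norm_eq_abs, ← Complex.norm_real, h1, PowerSeries.coeff_mul]
  refine (norm_sum_le _ _).trans (Finset.sum_le_sum fun p _ => ?_)
  simp only [gegS, PowerSeries.coeff_mk, norm_mul, norm_pow, hz, hw, one_pow, mul_one,
    Complex.norm_real, Real.norm_eq_abs, abs_of_nonneg (gegA_nonneg hα _)]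
  exact le_rfl

lemma geg_one (k : ℕ) (n : ℕ) :
    gegenbauer (((k : ℝ) + 1) / 2) n 1 = ((n + k).choose n : ℝ) := by
  have key : ∀ l : ℕ, ((l : ℝ) + k + 1) * ((l + k).choose l : ℝ)
      = ((l + 1 + k).choose (l + 1) : ℝ) * (l + 1) := by
    intro l
    have := Nat.add_one_mul_choose_eq (l + k) l
    rw [show l + 1 + k = l + k + 1 by ring]
    exact_mod_cast this
  induction n using Nat.twoStepInduction with
  | zero => simp [gegenbauer]
  | one =>
    simp [gegenbauer]; ring
  | more n ih0 ih1 =>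
    rw [gegenbauer, ih0, ih1, div_eq_iff (by positivity)]
    have h0 := key n
    have h1 := key (n + 1)
    push_cast at h1
    rw [show n + 2 + k = n + 1 + 1 + k by ring, show n + 2 = n + 1 + 1 by ring]
    linear_combination h1 - h0

theorem cmt_bound (m : ℕ) (hm : 2 ≤ m) (t : ℝ) (ht : 0 < t) :
    (∀ l : ℕ, ∀ u ∈ Set.Icc (-1 : ℝ) 1,
      |cmt m t l u| ≤ Real.exp (-((l : ℝ) * ((l : ℝ) + (m : ℝ) - 1)) * t / 2)
        * 2^7 * ((l : ℝ) + (m : ℝ) - 2)^(m + 1)) ∧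
    (∀ u ∈ Set.Icc (-1 : ℝ) 1, cmt m t 0 u = 0 ∧ cmt m t 1 u = 0) := by
  refine ⟨fun l u hu => ?_, fun u _ => by simp [cmt]⟩
  obtain ⟨k, rfl⟩ := Nat.exists_eq_add_of_le hm
  have e2 : (l : ℝ) + ((2 + k : ℕ) : ℝ) - 2 = ((l + k : ℕ) : ℝ) := by push_cast; ring
  rw [e2]
  unfold cmt
  split_ifs with h
  · have hl : 1 ≤ l + k := by omega
    have hx : (1 : ℝ) ≤ ((l + k : ℕ) : ℝ) := by exact_mod_cast hl
    have e1 : (((2 + k : ℕ) : ℝ) - 1) = (k : ℝ) + 1 := by push_cast; ring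
    rw [e1, mul_assoc, mul_assoc, abs_mul, Real.abs_exp]
    apply mul_le_mul_of_nonneg_left _ (Real.exp_nonneg _)
    have hg := geg_le (((k : ℝ) + 1) / 2) (by positivity) u hu l
    rw [geg_one, Nat.choose_symm_add] at hg
    have hc : ((l + k).choose k : ℝ) ≤ ((l + k : ℕ) : ℝ) ^ k := by
      exact_mod_cast Nat.choose_le_pow (l + k) k
    have hf : |(2 * (l : ℝ) + ((2 + k : ℕ) : ℝ) - 1) / ((k : ℝ) + 1)|
        ≤ 3 * ((l + k : ℕ) : ℝ) := by
      have e3 : 2 * (l : ℝ) + ((2 + k : ℕ) : ℝ) - 1 = 2 * l + k + 1 := by push_cast; ring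
      rw [e3, abs_of_nonneg (by positivity)]
      refine (div_le_self (by positivity) (by linarith [k.cast_nonneg (α := ℝ)])).trans ?_
      push_cast at hx ⊢
      linarith [k.cast_nonneg (α := ℝ)]
    rw [abs_mul]
    calc _ ≤ (3 * ((l + k : ℕ) : ℝ)) * ((l + k : ℕ) : ℝ) ^ k :=
          mul_le_mul hf (hg.trans hc) (abs_nonneg _) (by positivity)
      _ = 3 * ((l + k : ℕ) : ℝ) ^ (k + 1) := by ring
      _ ≤ 2 ^ 7 * ((l + k : ℕ) : ℝ) ^ (2 + k + 1) := by
          apply mul_le_mul (by norm_num) _ (by positivity) (by norm_num)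
          exact pow_le_pow_right₀ hx (by omega)
  · rw [abs_zero]; positivity
end
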